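/- Let n, m be natural numbers, let E = (Fin n → ℂ) × (Fin m → ℂ), and let U ⊆ E be an open neighborhood of 0 on which h : E → ℂ is analytic. For z ∈ E write ∂h/∂x_j (z) = fderiv ℂ h z (Pi.single j 1, 0) for j : Fin n and ∂h/∂y_i (z) = fderiv ℂ h z (0, Pi.single i 1) for i : Fin m. Then the following are equivalent. (1) There exist an open neighborhood V of 0 with V ⊆ U and functions a : Fin m → Fin n → E → ℂ and g : Fin m → E → ℂ, all analytic on V, such that for every z ∈ V and every i : Fin m one has ∂h/∂y_i (z) = (Σ_{j} a i j z * ∂h/∂x_j (z)) + g i z * h z. (2) There exist an open neighborhood W of 0 such that for all (x,y) ∈ W one has (x,0) ∈ W and W ⊆ U, a map φ : E → E analytic on W which is injective on W, maps W onto an open subset of U, and whose inverse is analytic on φ(W), and an analytic function v : E → ℂ on W that is nonvanishing on W, satisfying: for all (x,y) ∈ W, the second component of φ(x,y) equals y; φ(x,0) = (x,0) and v(x,0) = 1 whenever (x,0) ∈ W; and h(φ(x,y)) = v(x,y) * h(x,0) for all (x,y) ∈ W. -/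

import Mathlib

/-!
The substance is the implication from the infinitesimal condition to the product structure.  The
ideal relations say that the vector fields `X_i = ∂/∂y_i - ∑ⱼ a_ij ∂/∂x_j` satisfy
`X_i h = g_i h`.  For `p = (x, y)` near `0`, let `γ` be the curve on the real interval `[0, 1]` with
`γ(0) = (x, 0)` and `γ' = ∑ᵢ y_i X_i(γ)`, and put `φ(x, y) = γ(1)`.  The second component of `γ(1)`
is `y`, and `h ∘ γ` solves the linear equation with coefficient `∑ᵢ y_i g_i(γ)`, so
`h(φ(x, y)) = exp(∫₀¹ ∑ᵢ y_i g_i(γ)) · h(x, 0)`.  Moving along the rays `s ↦ s y` treats all the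
parameters `y_i` simultaneously.

What has to be shown is that `γ` depends analytically on `p`.  The integral equation
`γ = (x, 0) + ∫₀ ∑ᵢ y_i X_i(γ)` is solved by the analytic inverse function theorem in the Banach space
`C([0, 1], E)` (`exists_analytic_curves`).  This works because the superposition operator `u ↦ f ∘ u`
of an analytic `f` is analytic at constant functions (`AnalyticAt.superpos`): the power series of `f`
acts pointwise.  At `p = 0` the linearisation in `γ` is the identity, since the right-hand side is
multiplied by `y_i`.  The derivative of `φ` at `0` is a shear, hence `φ` is locally biholomorphic
(`exists_trivialization`).

Conversely (`exists_ideal_relation`), the push-forward of `∂/∂y_i` under `φ` has the form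
`∂/∂y_i - ∑ⱼ a_ij ∂/∂x_j`, and differentiating `h ∘ φ = v · h(x, 0)` in the direction `y_i` shows that
it multiplies `h` by `(∂v/∂y_i) / v`.
-/

open scoped Topology unitInterval
open Filter Set

/-! ### Superposition operators -/

/-- The superposition operator `u ↦ f ∘ u` on continuous functions; it takes the junk value `0`
where `f ∘ u` is not continuous. -/
noncomputable def superpos {K E F : Type*} [TopologicalSpace K] [TopologicalSpace E]
    [TopologicalSpace F] [Zero F] (f : E → F) (u : C(K, E)) : C(K, F) :=
  open Classical in if hc : Continuous (f ∘ u) then ⟨f ∘ u, hc⟩ else 0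

section Superposition

variable {K E F : Type*} [TopologicalSpace K] [CompactSpace K]
  [NormedAddCommGroup E] [NormedSpace ℂ E] [NormedAddCommGroup F] [NormedSpace ℂ F]

omit [CompactSpace K] [NormedSpace ℂ E] [NormedSpace ℂ F] in
lemma superpos_apply {f : E → F} {V : Set E} (hf : ContinuousOn f V) {u : C(K, E)}
    (hu : ∀ k, u k ∈ V) (k : K) : superpos f u k = f (u k) := by
  have hc : Continuous (f ∘ u) := by
    simpa using hf.comp_continuous u.continuous hu
  simp [superpos, hc]

/-- A continuous multilinear map acting pointwise on continuous functions. -/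
noncomputable def pointwiseMultilinear (K : Type*) [TopologicalSpace K] [CompactSpace K] {d : ℕ}
    (q : ContinuousMultilinearMap ℂ (fun _ : Fin d => E) F) :
    ContinuousMultilinearMap ℂ (fun _ : Fin d => C(K, E)) C(K, F) :=
  MultilinearMap.mkContinuous
    { toFun := fun u => ⟨fun k => q fun i => u i k, by fun_prop⟩
      map_update_add' := by
        intro _ u i x y
        ext k
        have (w : C(K, E)) : (fun j => (Function.update u i w) j k)
            = Function.update (fun j => u j k) i (w k) := by
          ext j; by_cases hj : j = i
          · subst hj; simp
          · simp [hj]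
        simp only [ContinuousMap.coe_mk, ContinuousMap.add_apply]
        convert q.map_update_add (fun j => u j k) i (x k) (y k) using 2
        · simpa using this (x + y)
        all_goals simpa using congrArg q (this _)
      map_update_smul' := by
        intro _ u i c x
        ext k
        have (w : C(K, E)) : (fun j => (Function.update u i w) j k)
            = Function.update (fun j => u j k) i (w k) := by
          ext j; by_cases hj : j = i
          · subst hj; simp
          · simp [hj]
        simp only [ContinuousMap.coe_mk, ContinuousMap.smul_apply]
        convert q.map_update_smul (fun j => u j k) i c (x k) using 2
        · simpa using this (c • x)
        all_goals simpa using congrArg q (this _) }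
    ‖q‖ (fun u => by
      refine (ContinuousMap.norm_le _ (by positivity)).2 fun k => ?_
      refine (q.le_opNorm _).trans ?_
      gcongr with i
      exact (u i).norm_coe_le_norm k)

lemma pointwiseMultilinear_apply {d : ℕ}
    (q : ContinuousMultilinearMap ℂ (fun _ : Fin d => E) F) (u : Fin d → C(K, E)) (k : K) :
    pointwiseMultilinear K q u k = q fun i => u i k := rfl

lemma norm_pointwiseMultilinear_le {d : ℕ}
    (q : ContinuousMultilinearMap ℂ (fun _ : Fin d => E) F) :
    ‖pointwiseMultilinear K q‖ ≤ ‖q‖ :=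
  MultilinearMap.mkContinuous_norm_le _ (norm_nonneg _) _

/-- The superposition operator of an analytic map is analytic at the constant functions. -/
lemma AnalyticAt.superpos [CompleteSpace F] {f : E → F} {c : E} (hf : AnalyticAt ℂ f c) :
    AnalyticAt ℂ (superpos f : C(K, E) → C(K, F)) (ContinuousMap.const K c) := by
  obtain ⟨p, r, hp⟩ := hf
  set P : FormalMultilinearSeries ℂ C(K, E) C(K, F) := fun d => pointwiseMultilinear K (p d) with hP
  have hrad : p.radius ≤ P.radius := by
    refine ENNReal.le_of_forall_nnreal_lt fun s hs => ?_
    obtain ⟨C, -, hC⟩ := p.norm_mul_pow_le_of_lt_radius hs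
    refine P.le_radius_of_bound C fun d => le_trans ?_ (hC d)
    gcongr
    exact norm_pointwiseMultilinear_le _
  refine ⟨P, r, hp.r_le.trans hrad, hp.r_pos, fun {y} hy => ?_⟩
  have hsum : Summable fun d => P d fun _ => y := by
    have hy' : y ∈ Metric.eball (0 : C(K, E)) P.radius :=
      Metric.eball_subset_eball (hp.r_le.trans hrad) hy
    exact (P.summable_norm_apply hy').of_norm
  have hval (k : K) : (∑' d, P d fun _ => y) k = f (c + y k) := by
    have h1 : HasSum (fun d => (P d fun _ => y) k) ((∑' d, P d fun _ => y) k) :=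
      hsum.hasSum.map (ContinuousMap.evalCLM ℂ k) (ContinuousMap.evalCLM ℂ k).continuous
    refine h1.unique (hp.hasSum ?_)
    rw [Metric.mem_eball, edist_zero_right] at hy ⊢
    refine lt_of_le_of_lt ?_ hy
    exact enorm_le_iff_norm_le.2 (y.norm_coe_le_norm k)
  have heq : (⇑(∑' d, P d fun _ => y) : K → F) = f ∘ (ContinuousMap.const K c + y) := by
    ext k; simp [hval k]
  have : _root_.superpos f (ContinuousMap.const K c + y) = ∑' d, P d fun _ => y := by
    have hc : Continuous (f ∘ (ContinuousMap.const K c + y)) := by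
      rw [← heq]; exact ContinuousMap.continuous _
    rw [_root_.superpos, dif_pos hc]
    ext k
    simp [hval k]
  rw [this]
  exact hsum.hasSum

end Superposition

/-! ### Integration as an operator -/

section Primitive

variable {E : Type*} [NormedAddCommGroup E] [NormedSpace ℂ E]

/-- The Volterra operator `u ↦ (s ↦ ∫₀ˢ u)` on continuous functions on the unit interval. -/
noncomputable def primitive (E : Type*) [NormedAddCommGroup E] [NormedSpace ℂ E] :
    C(I, E) →L[ℂ] C(I, E) :=
  LinearMap.mkContinuous
    { toFun := fun u => ⟨fun s => ∫ t in (0 : ℝ)..s, IccExtend zero_le_one u t, by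
        have hu : Continuous (IccExtend zero_le_one u : ℝ → E) := u.continuous.Icc_extend'
        exact (intervalIntegral.continuous_primitive
          (fun a b => hu.intervalIntegrable a b) 0).comp continuous_subtype_val⟩
      map_add' := fun u w => by
        have hu : Continuous (IccExtend zero_le_one u : ℝ → E) := u.continuous.Icc_extend'
        have hw : Continuous (IccExtend zero_le_one w : ℝ → E) := w.continuous.Icc_extend'
        ext s
        exact intervalIntegral.integral_add (hu.intervalIntegrable _ _)
          (hw.intervalIntegrable _ _)
      map_smul' := fun c u => by
        ext s
        exact intervalIntegral.integral_smul c _ }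
    1 (fun u => by
      refine (ContinuousMap.norm_le _ (by positivity)).2 fun s => ?_
      refine (intervalIntegral.norm_integral_le_of_norm_le_const (C := ‖u‖) fun t _ =>
        u.norm_coe_le_norm _).trans ?_
      rw [one_mul, sub_zero, abs_of_nonneg s.2.1]
      exact mul_le_of_le_one_right (norm_nonneg _) s.2.2)

lemma primitive_apply (u : C(I, E)) (s : I) :
    primitive E u s = ∫ t in (0 : ℝ)..s, IccExtend zero_le_one u t := rfl

lemma hasDerivAt_primitive [CompleteSpace E] (u : C(I, E)) (s : ℝ) :
    HasDerivAt (fun s : ℝ => ∫ t in (0 : ℝ)..s, IccExtend zero_le_one u t)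
      (IccExtend zero_le_one u s) s := by
  have hu : Continuous (IccExtend zero_le_one u : ℝ → E) := u.continuous.Icc_extend'
  exact intervalIntegral.integral_hasDerivAt_right (hu.intervalIntegrable _ _)
    hu.stronglyMeasurable.stronglyMeasurableAtFilter hu.continuousAt

end Primitive

/-! ### Analytic dependence of integral curves on parameters -/

/-- The shear `(x, p) ↦ (x - T p, p)`, as a continuous linear equivalence. -/
noncomputable def shearEquiv {P X : Type*} [NormedAddCommGroup P] [NormedSpace ℂ P]
    [NormedAddCommGroup X] [NormedSpace ℂ X] (T : P →L[ℂ] X) : (X × P) ≃L[ℂ] (X × P) :=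
  ContinuousLinearEquiv.equivOfInverse
    ((ContinuousLinearMap.fst ℂ X P - T.comp (ContinuousLinearMap.snd ℂ X P)).prod
      (ContinuousLinearMap.snd ℂ X P))
    ((ContinuousLinearMap.fst ℂ X P + T.comp (ContinuousLinearMap.snd ℂ X P)).prod
      (ContinuousLinearMap.snd ℂ X P))
    (fun _ => by simp) (fun _ => by simp)

/-- The analytic inverse function theorem in Banach spaces. -/
lemma exists_local_inverse {X Y : Type*} [NormedAddCommGroup X] [NormedSpace ℂ X] [CompleteSpace X]
    [NormedAddCommGroup Y] [NormedSpace ℂ Y] {f : X → Y} {a : X} {L : X ≃L[ℂ] Y}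
    (hf : AnalyticAt ℂ f a) (hL : HasFDerivAt f (L : X →L[ℂ] Y) a) :
    ∃ Φ : OpenPartialHomeomorph X Y, ⇑Φ = f ∧ a ∈ Φ.source ∧ AnalyticAt ℂ Φ.symm (f a) := by
  have hs : HasStrictFDerivAt f (L : X →L[ℂ] Y) a := hL.fderiv ▸ hf.hasStrictFDerivAt
  refine ⟨hs.toOpenPartialHomeomorph f, hs.toOpenPartialHomeomorph_coe,
    hs.mem_toOpenPartialHomeomorph_source, ?_⟩
  exact OpenPartialHomeomorph.analyticAt_symm' _ (i := L)
    hs.mem_toOpenPartialHomeomorph_source hf hL.fderiv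

section Curves

variable {m : ℕ} {E P : Type*} [NormedAddCommGroup E] [NormedSpace ℂ E] [CompleteSpace E]
  [NormedAddCommGroup P] [NormedSpace ℂ P] [CompleteSpace P]

/-- Solutions of `γ' = ∑ᵢ lᵢ(p) bᵢ(γ)`, `γ(0) = c(p)` on `[0, 1]`, written as an integral equation,
exist for small `p` and depend analytically on `p`.  The last clause records that the chosen solution
is the constant one when all the coefficients `lᵢ(p)` vanish. -/
lemma exists_analytic_curves (b : Fin m → E → E) (hb : ∀ i, AnalyticAt ℂ (b i) 0)
    (c : P →L[ℂ] E) (l : Fin m → P →L[ℂ] ℂ) :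
    ∃ S : P → C(I, E), AnalyticAt ℂ S 0 ∧ S 0 = 0 ∧
      (∀ᶠ p in 𝓝 (0 : P), S p = ContinuousMap.const I (c p)
        + primitive E (∑ i, l i p • superpos (b i) (S p))) ∧
      (∀ᶠ p in 𝓝 (0 : P), (∀ i, l i p = 0) → S p = ContinuousMap.const I (c p)) := by
  let κ : E →L[ℂ] C(I, E) := ContinuousLinearMap.const ℂ I
  have hκ (x : E) : κ x = ContinuousMap.const I x := rfl
  have hN (i) : AnalyticAt ℂ (superpos (b i) : C(I, E) → C(I, E)) 0 := by
    have := (hb i).superpos (K := I)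
    exact this
  -- The integral equation reads `Ψ (γ, p) = (0, p)`, and `D Ψ` is a shear at the origin.
  let Ψ₁ : C(I, E) × P → C(I, E) := fun q =>
    q.1 - κ (c q.2) - primitive E (∑ i, l i q.2 • superpos (b i) q.1)
  let Ψ : C(I, E) × P → C(I, E) × P := fun q => (Ψ₁ q, q.2)
  have hΨ₁ : AnalyticAt ℂ Ψ₁ 0 := by
    have hN' (i) : AnalyticAt ℂ (fun q : C(I, E) × P => superpos (b i) q.1) 0 :=
      AnalyticAt.fun_comp (f := Prod.fst) (hN i) analyticAt_fst
    have hl (i) : AnalyticAt ℂ (fun q : C(I, E) × P => l i q.2) 0 :=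
      ((l i).comp (ContinuousLinearMap.snd ℂ C(I, E) P)).analyticAt 0
    have hsum : AnalyticAt ℂ
        (fun q : C(I, E) × P => ∑ i, l i q.2 • superpos (b i) q.1) 0 :=
      Finset.analyticAt_fun_sum _ fun i _ => (hl i).fun_smul (hN' i)
    exact (analyticAt_fst.sub
      (((κ.comp c).comp (ContinuousLinearMap.snd ℂ C(I, E) P)).analyticAt 0)).sub
        (((primitive E).analyticAt _).comp hsum)
  have hΨ : AnalyticAt ℂ Ψ 0 := hΨ₁.prod analyticAt_snd
  let T : P →L[ℂ] C(I, E) :=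
    κ.comp c + (primitive E).comp (∑ i, (l i).smulRight (superpos (b i) 0))
  have hL : HasFDerivAt Ψ (shearEquiv T : C(I, E) × P →L[ℂ] C(I, E) × P) 0 := by
    have hterm (i) : HasFDerivAt (fun q : C(I, E) × P => l i q.2 • superpos (b i) q.1)
        (((l i).smulRight (superpos (b i) 0)).comp (ContinuousLinearMap.snd ℂ C(I, E) P)) 0 := by
      have h1 : HasFDerivAt (fun q : C(I, E) × P => l i q.2)
          ((l i).comp (ContinuousLinearMap.snd ℂ C(I, E) P)) 0 :=
        ((l i).comp (ContinuousLinearMap.snd ℂ C(I, E) P)).hasFDerivAt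
      have h2 : HasFDerivAt (fun q : C(I, E) × P => superpos (b i) q.1)
          ((fderiv ℂ (superpos (b i)) 0).comp (ContinuousLinearMap.fst ℂ C(I, E) P)) 0 :=
        HasFDerivAt.comp (g := superpos (b i)) (f := Prod.fst) (0 : C(I, E) × P)
          (hN i).differentiableAt.hasFDerivAt hasFDerivAt_fst
      refine (h1.smul h2).congr_fderiv ?_
      ext q <;> simp
    have hsum := HasFDerivAt.fun_sum (u := Finset.univ) fun i _ => hterm i
    have h3 := (hasFDerivAt_fst.sub
      (((κ.comp c).comp (ContinuousLinearMap.snd ℂ C(I, E) P)).hasFDerivAt)).sub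
        ((primitive E).hasFDerivAt.comp _ hsum)
    refine (HasFDerivAt.prodMk h3 hasFDerivAt_snd).congr_fderiv ?_
    ext q <;> simp [shearEquiv, T, sub_sub]
  obtain ⟨Φ, hΦ, h0, hΦs⟩ := exists_local_inverse hΨ hL
  have hΨ0 : Ψ 0 = 0 := by simp [Ψ, Ψ₁]
  rw [hΨ0] at hΦs
  have hS : Φ.symm 0 = 0 := by
    have := Φ.left_inv h0
    rwa [hΦ, hΨ0] at this
  have hin : AnalyticAt ℂ (fun p : P => ((0, p) : C(I, E) × P)) 0 :=
    (ContinuousLinearMap.inr ℂ C(I, E) P).analyticAt 0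
  refine ⟨fun p => (Φ.symm (0, p)).1, ?_, ?_, ?_, ?_⟩
  · exact analyticAt_fst.comp (AnalyticAt.fun_comp (f := fun p : P => ((0, p) : C(I, E) × P)) hΦs hin)
  · exact congrArg Prod.fst hS
  · have ht : Φ.target ∈ 𝓝 ((0, 0) : C(I, E) × P) := by
      refine Φ.open_target.mem_nhds ?_
      have := Φ.map_source h0
      rwa [hΦ, hΨ0] at this
    filter_upwards [hin.continuousAt ht] with p hp
    have h4 : Ψ (Φ.symm (0, p)) = (0, p) := by rw [← hΦ]; exact Φ.right_inv hp
    have h5 : (Φ.symm (0, p)).2 = p := congrArg Prod.snd h4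
    have h6 : Ψ₁ (Φ.symm (0, p)) = 0 := congrArg Prod.fst h4
    generalize Φ.symm (0, p) = q at h5 h6 ⊢
    subst h5
    simp only [Ψ₁, sub_sub, sub_eq_zero] at h6
    rwa [hκ] at h6
  · have hcont : ContinuousAt (fun p : P => (κ (c p), p)) 0 := by fun_prop
    have hs : Φ.source ∈ 𝓝 (κ (c 0), (0 : P)) := by
      refine Φ.open_source.mem_nhds ?_
      rw [map_zero, map_zero]
      exact h0
    filter_upwards [hcont hs] with p hp hl
    have h7 : Φ (κ (c p), p) = (0, p) := by simp [hΦ, Ψ, Ψ₁, hl]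
    rw [← h7, Φ.left_inv hp]
    rfl

/-- If `b_i h = g_i h` as derivations, then along a curve with `γ' = ∑ᵢ y_i b_i(γ)` the function `h`
solves a scalar linear differential equation, and is therefore multiplied by the exponential of an
integral. -/
lemma eq_exp_mul_along_curve {V : Set E} {h : E → ℂ} {b : Fin m → E → E} {g : Fin m → E → ℂ}
    (hh : ∀ z ∈ V, DifferentiableAt ℂ h z) (hb : ∀ i, ContinuousOn (b i) V)
    (hg : ∀ i, ContinuousOn (g i) V)
    (hder : ∀ z ∈ V, ∀ i, fderiv ℂ h z (b i z) = g i z * h z)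
    {c : E} {y : Fin m → ℂ} {γ : C(I, E)} (hγV : ∀ s, γ s ∈ V)
    (hγ : γ = ContinuousMap.const I c + primitive E (∑ i, y i • superpos (b i) γ)) :
    h (γ 1) = Complex.exp (primitive ℂ (∑ i, y i • superpos (g i) γ) 1) * h c := by
  set w : C(I, E) := ∑ i, y i • superpos (b i) γ with hw
  set k : C(I, ℂ) := ∑ i, y i • superpos (g i) γ with hk
  let Γ : ℝ → E := fun s => c + ∫ t in (0 : ℝ)..s, IccExtend zero_le_one w t
  let G : ℝ → ℂ := fun s => ∫ t in (0 : ℝ)..s, IccExtend zero_le_one k t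
  have hΓ (s : I) : Γ s = γ s := by
    rw [hγ]; rfl
  have hderiv (s : ℝ) (hs : s ∈ Icc (0 : ℝ) 1) :
      HasDerivAt (fun s => Complex.exp (-G s) * h (Γ s)) 0 s := by
    have h1 : HasDerivAt Γ (w ⟨s, hs⟩) s := by
      have := (hasDerivAt_primitive w s).const_add c
      rwa [IccExtend_of_mem _ _ hs] at this
    have h2 : HasDerivAt G (k ⟨s, hs⟩) s := by
      have := hasDerivAt_primitive k s
      rwa [IccExtend_of_mem _ _ hs] at this
    have hΓs : Γ s = γ ⟨s, hs⟩ := hΓ ⟨s, hs⟩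
    have hmem : Γ s ∈ V := hΓs ▸ hγV _
    have h3 : HasDerivAt (fun s => h (Γ s)) (fderiv ℂ h (Γ s) (w ⟨s, hs⟩)) s :=
      HasFDerivAt.comp_hasDerivAt s ((hh _ hmem).hasFDerivAt.restrictScalars ℝ) h1
    have h4 : fderiv ℂ h (Γ s) (w ⟨s, hs⟩) = k ⟨s, hs⟩ * h (Γ s) := by
      simp only [hw, hk, ContinuousMap.coe_sum, ContinuousMap.coe_smul, Finset.sum_apply,
        Pi.smul_apply, superpos_apply (hb _) hγV, superpos_apply (hg _) hγV, ← hΓs, map_sum,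
        map_smul, hder _ hmem, Finset.sum_mul, smul_eq_mul, mul_assoc]
    refine (h2.neg.cexp.mul h3).congr_deriv ?_
    rw [h4]; ring
  -- `exp (-G) * (h ∘ Γ)` is constant on `[0, 1]`.
  have hconst := constant_of_has_deriv_right_zero
    (fun s hs => (hderiv s hs).continuousAt.continuousWithinAt)
    (fun s hs => (hderiv s (Ico_subset_Icc_self hs)).hasDerivWithinAt) 1 (by simp)
  have hΓ0 : Γ 0 = c := by simp [Γ]
  have hG0 : G 0 = 0 := by simp [G]
  have hG1 : G 1 = primitive ℂ k 1 := rfl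
  have hΓ1 : Γ 1 = γ 1 := hΓ 1
  simp only [hΓ0, hG0, hΓ1, neg_zero, Complex.exp_zero, one_mul] at hconst
  rw [← hconst, ← hG1, ← mul_assoc, ← Complex.exp_add]
  simp

end Curves

/-! ### The two implications -/

/-- A curve whose velocity has constant second component `y` moves by `y` in that component over unit
time. -/
lemma snd_primitive_one {X Y : Type*} [NormedAddCommGroup X] [NormedSpace ℂ X] [CompleteSpace X]
    [NormedAddCommGroup Y] [NormedSpace ℂ Y] [CompleteSpace Y] {u : C(I, X × Y)} {y : Y}
    (hu : ∀ s, (u s).2 = y) : (primitive (X × Y) u 1).2 = y := by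
  have hc : Continuous (IccExtend zero_le_one u : ℝ → X × Y) := u.continuous.Icc_extend'
  rw [primitive_apply]
  have := (ContinuousLinearMap.snd ℂ X Y).intervalIntegral_comp_comm
    (hc.intervalIntegrable (μ := MeasureTheory.volume) 0 1)
  simp only [ContinuousLinearMap.coe_snd'] at this
  refine (this.symm.trans ?_)
  simp [IccExtend, hu]

/-- Vector fields `b_i` lifting `∂/∂y_i` with `b_i h ∈ (h)` trivialise `h` along the `y`-directions, up
to a unit. -/
lemma exists_trivialization (n m : ℕ)
    (h : (Fin n → ℂ) × (Fin m → ℂ) → ℂ)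
    (U : Set ((Fin n → ℂ) × (Fin m → ℂ))) (hU : IsOpen U)
    (hU0 : (0 : (Fin n → ℂ) × (Fin m → ℂ)) ∈ U)
    (hh : AnalyticOnNhd ℂ h U)
    (V : Set ((Fin n → ℂ) × (Fin m → ℂ))) (hV : IsOpen V)
    (hV0 : (0 : (Fin n → ℂ) × (Fin m → ℂ)) ∈ V) (hVU : V ⊆ U)
    (b : Fin m → ((Fin n → ℂ) × (Fin m → ℂ)) → ((Fin n → ℂ) × (Fin m → ℂ)))
    (g : Fin m → ((Fin n → ℂ) × (Fin m → ℂ)) → ℂ)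
    (hb : ∀ i, AnalyticOnNhd ℂ (b i) V) (hg : ∀ i, AnalyticOnNhd ℂ (g i) V)
    (hb2 : ∀ i z, (b i z).2 = Pi.single i 1)
    (hder : ∀ z ∈ V, ∀ i, fderiv ℂ h z (b i z) = g i z * h z) :
    ∃ W : Set ((Fin n → ℂ) × (Fin m → ℂ)), IsOpen W ∧
        (0 : (Fin n → ℂ) × (Fin m → ℂ)) ∈ W ∧ W ⊆ U ∧
        (∀ p ∈ W, ((p.1, (0 : Fin m → ℂ)) : (Fin n → ℂ) × (Fin m → ℂ)) ∈ W) ∧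
      ∃ φ : ((Fin n → ℂ) × (Fin m → ℂ)) → ((Fin n → ℂ) × (Fin m → ℂ)),
      ∃ v : ((Fin n → ℂ) × (Fin m → ℂ)) → ℂ,
        AnalyticOnNhd ℂ φ W ∧
        Set.InjOn φ W ∧
        IsOpen (φ '' W) ∧ φ '' W ⊆ U ∧
        (∃ ψ : ((Fin n → ℂ) × (Fin m → ℂ)) → ((Fin n → ℂ) × (Fin m → ℂ)),
          AnalyticOnNhd ℂ ψ (φ '' W) ∧ ∀ p ∈ W, ψ (φ p) = p) ∧
        AnalyticOnNhd ℂ v W ∧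
        (∀ p ∈ W, v p ≠ 0) ∧
        (∀ p ∈ W, (φ p).2 = p.2) ∧
        (∀ x : Fin n → ℂ, ((x, (0 : Fin m → ℂ)) : (Fin n → ℂ) × (Fin m → ℂ)) ∈ W →
          φ (x, 0) = (x, 0) ∧ v (x, 0) = 1) ∧
        (∀ p ∈ W, h (φ p) = v p * h (p.1, (0 : Fin m → ℂ))) := by
  let X := Fin n → ℂ
  let Y := Fin m → ℂ
  let c : X × Y →L[ℂ] X × Y :=
    (ContinuousLinearMap.inl ℂ X Y).comp (ContinuousLinearMap.fst ℂ X Y)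
  let l (i : Fin m) : X × Y →L[ℂ] ℂ :=
    (ContinuousLinearMap.proj i).comp (ContinuousLinearMap.snd ℂ X Y)
  have hc (p : X × Y) : c p = (p.1, 0) := rfl
  have hl (i) (p : X × Y) : l i p = p.2 i := rfl
  obtain ⟨S, hSa, hS0, hSeq, hSc⟩ := exists_analytic_curves b (fun i => hb i 0 hV0) c l
  simp only [hc, hl] at hSeq hSc
  let ev : C(I, X × Y) →L[ℂ] X × Y := ContinuousMap.evalCLM ℂ 1
  let φ : X × Y → X × Y := fun p => S p 1
  let v : X × Y → ℂ := fun p =>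
    Complex.exp (primitive ℂ (∑ i, p.2 i • superpos (g i) (S p)) 1)
  have hφa : AnalyticAt ℂ φ 0 := (ev.analyticAt _).comp hSa
  have hva : AnalyticAt ℂ v 0 := by
    have h1 (i) : AnalyticAt ℂ (fun p => superpos (g i) (S p)) 0 := by
      refine AnalyticAt.fun_comp ?_ hSa
      rw [hS0]
      exact (hg i 0 hV0).superpos (K := I)
    have h2 : AnalyticAt ℂ (fun p : X × Y => ∑ i, p.2 i • superpos (g i) (S p)) 0 :=
      Finset.analyticAt_fun_sum _ fun i _ => ((l i).analyticAt 0).fun_smul (h1 i)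
    exact ((((ContinuousMap.evalCLM ℂ (1 : I)).comp (primitive ℂ)).analyticAt _).fun_comp h2).cexp
  have hSV : ∀ᶠ p in 𝓝 (0 : X × Y), ∀ s, S p s ∈ V := by
    obtain ⟨ε, hε, hball⟩ := Metric.mem_nhds_iff.1 (hV.mem_nhds hV0)
    have h1 := hSa.continuousAt (Metric.ball_mem_nhds _ hε)
    filter_upwards [h1] with p hp s
    refine hball ?_
    simp only [hS0, mem_preimage, mem_ball_zero_iff] at hp ⊢
    exact ((S p).norm_coe_le_norm s).trans_lt hp
  have hφ2 : ∀ᶠ p in 𝓝 (0 : X × Y), (φ p).2 = p.2 := by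
    filter_upwards [hSeq, hSV] with p hp hpV
    have h1 : φ p = (p.1, 0) + primitive (X × Y) (∑ i, p.2 i • superpos (b i) (S p)) 1 :=
      DFunLike.congr_fun hp 1
    rw [h1, Prod.snd_add, snd_primitive_one (y := p.2), zero_add]
    intro s
    simp only [ContinuousMap.coe_sum, ContinuousMap.coe_smul, Finset.sum_apply, Prod.snd_sum,
        Pi.smul_apply, superpos_apply (hb _).continuousOn hpV, Prod.smul_snd, hb2]
    exact (pi_eq_sum_univ' p.2).symm
  have hφ0 : ∀ᶠ p in 𝓝 (0 : X × Y), p.2 = 0 → S p = ContinuousMap.const I (p.1, 0) := by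
    filter_upwards [hSc] with p hp hp2
    exact hp fun i => by rw [hp2]; rfl
  have hφz : φ 0 = 0 := by simp [φ, hS0]
  -- `φ` is the identity on `y = 0` and preserves `y`, so its derivative at `0` is a shear.
  obtain ⟨T, hT⟩ : ∃ T : Y →L[ℂ] X, HasFDerivAt φ (shearEquiv T : X × Y →L[ℂ] X × Y) 0 := by
    set A := fderiv ℂ φ 0 with hA
    have hAd : HasFDerivAt φ A 0 := hφa.differentiableAt.hasFDerivAt
    have h1 : (ContinuousLinearMap.snd ℂ X Y).comp A = ContinuousLinearMap.snd ℂ X Y :=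
      ((ContinuousLinearMap.snd ℂ X Y).hasFDerivAt.comp 0 hAd).unique
        ((ContinuousLinearMap.snd ℂ X Y).hasFDerivAt.congr_of_eventuallyEq hφ2)
    have h2 : A.comp (ContinuousLinearMap.inl ℂ X Y) = ContinuousLinearMap.inl ℂ X Y := by
      have h3 : HasFDerivAt (φ ∘ ContinuousLinearMap.inl ℂ X Y)
          (A.comp (ContinuousLinearMap.inl ℂ X Y)) 0 :=
        HasFDerivAt.comp (0 : X) hAd (ContinuousLinearMap.inl ℂ X Y).hasFDerivAt
      refine h3.unique ((ContinuousLinearMap.inl ℂ X Y).hasFDerivAt.congr_of_eventuallyEq ?_)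
      have h4 : Tendsto (ContinuousLinearMap.inl ℂ X Y) (𝓝 0) (𝓝 0) :=
        (ContinuousLinearMap.inl ℂ X Y).continuous.tendsto' _ _ (map_zero _)
      filter_upwards [h4.eventually hφ0] with x hx
      exact DFunLike.congr_fun (hx rfl) 1
    refine ⟨-((ContinuousLinearMap.fst ℂ X Y).comp (A.comp (ContinuousLinearMap.inr ℂ X Y))),
      hAd.congr_fderiv ?_⟩
    refine ContinuousLinearMap.ext fun q => ?_
    have h5 : A q = A (q.1, 0) + A (0, q.2) := by rw [← map_add]; simp
    have h6 : A (q.1, 0) = (q.1, 0) := DFunLike.congr_fun h2 q.1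
    have h7 : (A (0, q.2)).2 = q.2 := DFunLike.congr_fun h1 (0, q.2)
    rw [h5, h6]
    ext1
    · simp [shearEquiv]
    · simp [shearEquiv, h7]
  obtain ⟨Φ, hΦ, h0, hΦs⟩ := exists_local_inverse hφa hT
  rw [hφz] at hΦs
  have hφt : Tendsto φ (𝓝 0) (𝓝 0) := by simpa [hφz] using hφa.continuousAt.tendsto
  have hall := hSeq.and <| hSV.and <| hφ2.and <| hφ0.and <|
    hφa.eventually_analyticAt.and <| hva.eventually_analyticAt.and <|
    (hφt.eventually hΦs.eventually_analyticAt).and <| (hφt.eventually (hU.mem_nhds hU0)).and <|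
    (hU.eventually_mem hU0).and (Φ.open_source.eventually_mem h0)
  obtain ⟨ε, hε, hball⟩ := Metric.eventually_nhds_iff_ball.1 hall
  choose k1 k2 k3 k4 k5 k6 k7 k8 k9 k10 using hball
  -- In the sup norm, balls centred at `0` are stable under the projection `(x, y) ↦ (x, 0)`.
  refine ⟨Metric.ball 0 ε, Metric.isOpen_ball, Metric.mem_ball_self hε, k9, ?_, φ, v, k5, ?_, ?_,
    ?_, ⟨Φ.symm, ?_, ?_⟩, k6, fun p _ => Complex.exp_ne_zero _, k3, ?_, ?_⟩
  · intro p hp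
    rw [mem_ball_zero_iff] at hp ⊢
    refine lt_of_le_of_lt ?_ hp
    simp [Prod.norm_def]
  · rw [← hΦ]; exact Φ.injOn.mono k10
  · rw [← hΦ]; exact Φ.isOpen_image_of_subset_source Metric.isOpen_ball k10
  · rintro _ ⟨p, hp, rfl⟩; exact k8 p hp
  · rintro _ ⟨p, hp, rfl⟩; exact k7 p hp
  · intro p hp
    rw [← hΦ]; exact Φ.left_inv (k10 p hp)
  · intro x hx
    refine ⟨DFunLike.congr_fun (k4 _ hx rfl) 1, ?_⟩
    simp [v]
  · intro p hp
    exact eq_exp_mul_along_curve (fun z hz => (hh z (hVU hz)).differentiableAt)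
      (fun i => (hb i).continuousOn) (fun i => (hg i).continuousOn) hder (k2 p hp) (k1 p hp)

/-- A trivialisation of `h` up to a unit pushes the fields `∂/∂y_i` forward to fields that witness the
ideal relations on the image. -/
lemma exists_ideal_relation (n m : ℕ)
    (h : (Fin n → ℂ) × (Fin m → ℂ) → ℂ) (U W : Set ((Fin n → ℂ) × (Fin m → ℂ)))
    (hh : AnalyticOnNhd ℂ h U) (hW : IsOpen W) (hWU : W ⊆ U)
    (hW0 : ∀ p ∈ W, ((p.1, (0 : Fin m → ℂ)) : (Fin n → ℂ) × (Fin m → ℂ)) ∈ W)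
    (φ ψ : ((Fin n → ℂ) × (Fin m → ℂ)) → ((Fin n → ℂ) × (Fin m → ℂ)))
    (v : ((Fin n → ℂ) × (Fin m → ℂ)) → ℂ)
    (hφ : AnalyticOnNhd ℂ φ W) (hφU : φ '' W ⊆ U) (hψ : AnalyticOnNhd ℂ ψ (φ '' W))
    (hψφ : ∀ p ∈ W, ψ (φ p) = p) (hv : AnalyticOnNhd ℂ v W) (hv0 : ∀ p ∈ W, v p ≠ 0)
    (hφ2 : ∀ p ∈ W, (φ p).2 = p.2)
    (hrel : ∀ p ∈ W, h (φ p) = v p * h (p.1, (0 : Fin m → ℂ))) :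
    ∃ a : Fin m → Fin n → ((Fin n → ℂ) × (Fin m → ℂ)) → ℂ,
    ∃ g : Fin m → ((Fin n → ℂ) × (Fin m → ℂ)) → ℂ,
      (∀ i j, AnalyticOnNhd ℂ (a i j) (φ '' W)) ∧
      (∀ i, AnalyticOnNhd ℂ (g i) (φ '' W)) ∧
      (∀ z ∈ φ '' W, ∀ i : Fin m,
        fderiv ℂ h z (0, Pi.single i 1) =
          (∑ j : Fin n, a i j z * fderiv ℂ h z (Pi.single j 1, 0)) + g i z * h z) := by
  let X := Fin n → ℂ
  let Y := Fin m → ℂ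
  let e (i : Fin m) : X × Y := (0, Pi.single i 1)
  have hmaps : MapsTo ψ (φ '' W) W := by
    rintro _ ⟨p, hp, rfl⟩; rwa [hψφ p hp]
  have hX (i) : AnalyticOnNhd ℂ (fun p => fderiv ℂ φ p (e i)) W := fun p hp =>
    ((ContinuousLinearMap.apply ℂ (X × Y) (e i)).analyticAt _).fun_comp (hφ p hp).fderiv
  have hvd (i) : AnalyticOnNhd ℂ (fun p => fderiv ℂ v p (e i) / v p) W := fun p hp =>
    (((ContinuousLinearMap.apply ℂ ℂ (e i)).analyticAt _).fun_comp (hv p hp).fderiv).fun_div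
      (hv p hp) (hv0 p hp)
  refine ⟨fun i j q => -(fderiv ℂ φ (ψ q) (e i)).1 j, fun i q => fderiv ℂ v (ψ q) (e i) / v (ψ q),
    fun i j => ?_, fun i => (hvd i).comp hψ hmaps, ?_⟩
  · intro q hq
    have h1 := (hX i (ψ q) (hmaps hq)).fun_comp (hψ q hq)
    exact ((((ContinuousLinearMap.proj j : X →L[ℂ] ℂ).comp
      (ContinuousLinearMap.fst ℂ X Y)).analyticAt _).fun_comp h1).neg
  · rintro _ ⟨p, hp, rfl⟩ i
    simp only [hψφ p hp]
    have hnhds : W ∈ 𝓝 p := hW.mem_nhds hp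
    have hφd : HasFDerivAt φ (fderiv ℂ φ p) p := (hφ p hp).differentiableAt.hasFDerivAt
    have hvp : HasFDerivAt v (fderiv ℂ v p) p := (hv p hp).differentiableAt.hasFDerivAt
    have hhd : HasFDerivAt h (fderiv ℂ h (φ p)) (φ p) :=
      (hh _ (hφU ⟨p, hp, rfl⟩)).differentiableAt.hasFDerivAt
    have hh0 : HasFDerivAt h (fderiv ℂ h (p.1, 0)) (p.1, 0) :=
      (hh _ (hWU (hW0 p hp))).differentiableAt.hasFDerivAt
    let c : X × Y →L[ℂ] X × Y :=
      (ContinuousLinearMap.inl ℂ X Y).comp (ContinuousLinearMap.fst ℂ X Y)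
    have h2 : (fderiv ℂ φ p (e i)).2 = Pi.single i 1 := by
      have h3 : (ContinuousLinearMap.snd ℂ X Y).comp (fderiv ℂ φ p)
          = ContinuousLinearMap.snd ℂ X Y :=
        ((ContinuousLinearMap.snd ℂ X Y).hasFDerivAt.comp p hφd).unique
          ((ContinuousLinearMap.snd ℂ X Y).hasFDerivAt.congr_of_eventuallyEq
            (by filter_upwards [hnhds] with q hq using hφ2 q hq))
      exact DFunLike.congr_fun h3 (e i)
    have h4 : HasFDerivAt (fun q : X × Y => h (c q)) ((fderiv ℂ h (p.1, 0)).comp c) p :=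
      HasFDerivAt.comp (g := h) p hh0 c.hasFDerivAt
    have h5 := ((hhd.comp p hφd).unique ((hvp.mul h4).congr_of_eventuallyEq
      (by filter_upwards [hnhds] with q hq using hrel q hq)))
    have h6 : fderiv ℂ h (φ p) (fderiv ℂ φ p (e i)) = fderiv ℂ v p (e i) / v p * h (φ p) := by
      have h7 := DFunLike.congr_fun h5 (e i)
      have h8 : c (e i) = 0 := rfl
      have h9 : c p = (p.1, 0) := rfl
      simp only [ContinuousLinearMap.comp_apply, add_apply,
        smul_apply, h8, h9, map_zero, smul_eq_mul, mul_zero, zero_add] at h7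
      have h11 := hv0 p hp
      rw [h7, hrel p hp]
      field_simp
    have h10 : fderiv ℂ φ p (e i)
        = (∑ j, (fderiv ℂ φ p (e i)).1 j • ((Pi.single j 1, 0) : X × Y)) + e i := by
      ext1
      · simp only [e, Prod.fst_add, Prod.fst_sum, Prod.smul_fst, add_zero]
        exact pi_eq_sum_univ' _
      · rw [h2]
        simp [e, Prod.snd_sum]
    rw [h10] at h6
    simp only [map_add, map_sum, map_smul, smul_eq_mul] at h6
    rw [← h6]
    simp [e]

/-- **Saito's triviality lemma.**  Let `h` be analytic on an open neighborhood `U` of `0` in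
`E = ℂⁿ × ℂᵐ` (with coordinates `x` on the first factor and `y` on the second).  The
following are equivalent:

(1) near `0`, each partial derivative `∂h/∂y_i` lies in the ideal generated by
`h, ∂h/∂x_1, …, ∂h/∂x_n`, with analytic coefficients;

(2) there is a biholomorphism `φ` of a neighborhood `W` of `0` onto an open subset of `U`
of the form `φ(x,y) = (φ₁(x,y), y)` with `φ(x,0) = (x,0)`, and a nonvanishing analytic
unit `v` with `v(x,0) = 1`, such that `h(φ(x,y)) = v(x,y) · h(x,0)`; i.e. the divisor
`{h = 0}` is locally at `0` a Cartesian product `D' × ℂᵐ` with trivial factor `ℂᵐ`. -/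
theorem saito_triviality_lemma (n m : ℕ)
    (h : (Fin n → ℂ) × (Fin m → ℂ) → ℂ)
    (U : Set ((Fin n → ℂ) × (Fin m → ℂ))) (hU : IsOpen U)
    (hU0 : (0 : (Fin n → ℂ) × (Fin m → ℂ)) ∈ U)
    (hh : AnalyticOnNhd ℂ h U) :
    (∃ V : Set ((Fin n → ℂ) × (Fin m → ℂ)), IsOpen V ∧
        (0 : (Fin n → ℂ) × (Fin m → ℂ)) ∈ V ∧ V ⊆ U ∧
      ∃ a : Fin m → Fin n → ((Fin n → ℂ) × (Fin m → ℂ)) → ℂ,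
      ∃ g : Fin m → ((Fin n → ℂ) × (Fin m → ℂ)) → ℂ,
        (∀ i j, AnalyticOnNhd ℂ (a i j) V) ∧
        (∀ i, AnalyticOnNhd ℂ (g i) V) ∧
        (∀ z ∈ V, ∀ i : Fin m,
          fderiv ℂ h z (0, Pi.single i 1) =
            (∑ j : Fin n, a i j z * fderiv ℂ h z (Pi.single j 1, 0)) + g i z * h z))
    ↔
    (∃ W : Set ((Fin n → ℂ) × (Fin m → ℂ)), IsOpen W ∧
        (0 : (Fin n → ℂ) × (Fin m → ℂ)) ∈ W ∧ W ⊆ U ∧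
        (∀ p ∈ W, ((p.1, (0 : Fin m → ℂ)) : (Fin n → ℂ) × (Fin m → ℂ)) ∈ W) ∧
      ∃ φ : ((Fin n → ℂ) × (Fin m → ℂ)) → ((Fin n → ℂ) × (Fin m → ℂ)),
      ∃ v : ((Fin n → ℂ) × (Fin m → ℂ)) → ℂ,
        AnalyticOnNhd ℂ φ W ∧
        Set.InjOn φ W ∧
        IsOpen (φ '' W) ∧ φ '' W ⊆ U ∧
        (∃ ψ : ((Fin n → ℂ) × (Fin m → ℂ)) → ((Fin n → ℂ) × (Fin m → ℂ)),
          AnalyticOnNhd ℂ ψ (φ '' W) ∧ ∀ p ∈ W, ψ (φ p) = p) ∧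
        AnalyticOnNhd ℂ v W ∧
        (∀ p ∈ W, v p ≠ 0) ∧
        (∀ p ∈ W, (φ p).2 = p.2) ∧
        (∀ x : Fin n → ℂ, ((x, (0 : Fin m → ℂ)) : (Fin n → ℂ) × (Fin m → ℂ)) ∈ W →
          φ (x, 0) = (x, 0) ∧ v (x, 0) = 1) ∧
        (∀ p ∈ W, h (φ p) = v p * h (p.1, (0 : Fin m → ℂ)))) := by
  constructor
  · rintro ⟨V, hV, hV0, hVU, a, g, ha, hg, hrel⟩
    refine exists_trivialization n m h U hU hU0 hh V hV hV0 hVU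
      (fun i z => (fun j => -a i j z, Pi.single i 1)) g (fun i => ?_) hg (fun _ _ => rfl) ?_
    · intro z hz
      exact (analyticAt_pi_iff.2 fun j => (ha i j z hz).fun_neg).prod analyticAt_const
    · intro z hz i
      have hdecomp : (((fun j => -a i j z), Pi.single i 1) : (Fin n → ℂ) × (Fin m → ℂ))
          = (0, Pi.single i 1) - ∑ j, a i j z • ((Pi.single j 1, 0) : (Fin n → ℂ) × (Fin m → ℂ)) := by
        ext1
        · simp only [Prod.fst_sub, Prod.fst_sum, Prod.smul_fst, zero_sub]
          rw [← pi_eq_sum_univ' fun j => a i j z]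
          rfl
        · simp [Prod.snd_sum]
      rw [hdecomp, map_sub, map_sum, hrel z hz i]
      simp only [map_smul, smul_eq_mul]
      ring
  · rintro ⟨W, hW, hW0, hWU, hWp, φ, v, hφ, -, hφo, hφU, ⟨ψ, hψ, hψφ⟩, hv, hv0, hφ2, hφx, hrel⟩
    exact ⟨φ '' W, hφo, ⟨0, hW0, (hφx 0 hW0).1⟩, hφU,
      exists_ideal_relation n m h U W hh hW hWU hWp φ ψ v hφ hφU hψ hψφ hv hv0 hφ2 hrel⟩
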